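/- Let R ≥ 1, let g : ℝ^n → ℝ be a polynomial, let 0 < ρ < 1 and 0 ≤ λ ≤ 1, and let x ∈ ℝ^n. Then for independent y, y', z ∼ N(0,1)^n: E_{y,y',z}[ ( (Δ^{R,λ}_{y,y'}(g_{ρ|z}))(x) )² ] ≤ E_{y,y',z}[ ( (Δ^{R,λ}_{y,y'} g)_{ρ|z}(x) )² ]. -/

import Mathlib

open MeasureTheory ProbabilityTheory MvPolynomial

/-- The standard Gaussian measure `N(0,1)^n` on `ℝ^n`. -/
noncomputable def gaussianN (n : ℕ) : Measure (Fin n → ℝ) :=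
  Measure.pi fun _ => gaussianReal 0 1

/-- The normalized probabilists' Hermite polynomial `h_k = H_k / √(k!)`. -/
noncomputable def hermiteFn (k : ℕ) (t : ℝ) : ℝ :=
  ((Polynomial.hermite k).map (Int.castRingHom ℝ)).eval t / Real.sqrt (Nat.factorial k)

/-- The multivariate Hermite polynomial `h_α(x) = ∏ i, h_{α i}(x i)`. -/
noncomputable def hermiteMv {n : ℕ} (α : Fin n → ℕ) (x : Fin n → ℝ) : ℝ :=
  ∏ i, hermiteFn (α i) (x i)

/-- Hermite coefficient `f̂(α) = E_{x ∼ N(0,1)^n}[f(x)·h_α(x)]` of a function. -/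
noncomputable def hermiteCoeffF {n : ℕ} (f : (Fin n → ℝ) → ℝ) (α : Fin n → ℕ) : ℝ :=
  ∫ x, f x * hermiteMv α x ∂(gaussianN n)

/-- Hermite coefficient `ĝ(α)` of a polynomial. -/
noncomputable def hermiteCoeff {n : ℕ} (g : MvPolynomial (Fin n) ℝ) (α : Fin n → ℕ) : ℝ :=
  hermiteCoeffF (fun x => eval x g) α

/-- The squared Gaussian 2-norm `‖g‖₂² = E_{x ∼ N(0,1)^n}[g(x)²]`. -/
noncomputable def norm2sq {n : ℕ} (g : MvPolynomial (Fin n) ℝ) : ℝ :=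
  ∫ x, (eval x g) ^ 2 ∂(gaussianN n)

/-- The `λ`-zoom of `g` at `x`: `g_{λ|x}(y) = g(√(1-λ)·x + √λ·y)`, as a polynomial in `y`. -/
noncomputable def zoom {n : ℕ} (g : MvPolynomial (Fin n) ℝ) (lam : ℝ) (x : Fin n → ℝ) :
    MvPolynomial (Fin n) ℝ :=
  aeval (fun i => C (Real.sqrt (1 - lam) * x i) + C (Real.sqrt lam) * X i) g

/-- `HyperVar_R[g^{≥m}] = Σ_{|α| ≥ m} R^{2|α|}·ĝ(α)²`. -/
noncomputable def hyperVarGE {n : ℕ} (R : ℝ) (m : ℕ) (g : MvPolynomial (Fin n) ℝ) : ℝ :=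
  ∑' α : Fin n → ℕ, if m ≤ ∑ i, α i then R ^ (2 * ∑ i, α i) * hermiteCoeff g α ^ 2 else 0

/-- `HyperVar_R[g] = Σ_{α ≠ 0} R^{2|α|}·ĝ(α)²`. -/
noncomputable def hyperVar {n : ℕ} (R : ℝ) (g : MvPolynomial (Fin n) ℝ) : ℝ :=
  hyperVarGE R 1 g

/-- A nice distribution of polynomials of degree at most `d` on `ℝ^n`, indexed by
`υ ∈ ℝ^I`: each `g υ` has degree at most `d` and each coefficient of `g υ` is a
polynomial of degree at most `d` in `υ`. -/
def NiceFamily (n I d : ℕ) (g : (Fin I → ℝ) → MvPolynomial (Fin n) ℝ) : Prop :=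
  (∀ υ, (g υ).totalDegree ≤ d) ∧
  ∀ m : Fin n →₀ ℕ, ∃ P : MvPolynomial (Fin I) ℝ,
    P.totalDegree ≤ d ∧ ∀ υ, coeff m (g υ) = eval υ P

/-- The Gaussian noise operator `U_ρ f = Σ_α ρ^{|α|}·f̂(α)·h_α`, applied to a function. -/
noncomputable def noiseOpF {n : ℕ} (ρ : ℝ) (f : (Fin n → ℝ) → ℝ) (x : Fin n → ℝ) : ℝ :=
  ∑' α : Fin n → ℕ, ρ ^ (∑ i, α i) * hermiteCoeffF f α * hermiteMv α x

/-- The Gaussian noise operator applied to a polynomial. -/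
noncomputable def noiseOpP {n : ℕ} (ρ : ℝ) (g : MvPolynomial (Fin n) ℝ) :
    (Fin n → ℝ) → ℝ :=
  noiseOpF ρ (fun x => eval x g)

/-- The amplified noisy derivative operator
`(Δ^{R,λ}_{y,y'} g)(x) = (U_R(g_{λ|x})(y) − U_R(g_{λ|x})(y'))/√2`. -/
noncomputable def deltaOp {n : ℕ} (R lam : ℝ) (y y' : Fin n → ℝ)
    (g : MvPolynomial (Fin n) ℝ) (x : Fin n → ℝ) : ℝ :=
  (noiseOpP R (zoom g lam x) y - noiseOpP R (zoom g lam x) y') / Real.sqrt 2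

/-! ### The univariate Hermite polynomials -/

/-- The probabilists' Hermite polynomial with real coefficients. -/
noncomputable def hermiteReal (k : ℕ) : Polynomial ℝ :=
  (Polynomial.hermite k).map (Int.castRingHom ℝ)

theorem hermiteReal_zero : hermiteReal 0 = 1 := by simp [hermiteReal]

theorem hermiteReal_succ (k : ℕ) :
    hermiteReal (k + 1) =
      Polynomial.X * hermiteReal k - Polynomial.derivative (hermiteReal k) := by
  simp [hermiteReal, Polynomial.hermite_succ, Polynomial.derivative_map]

theorem derivative_hermiteReal_succ (k : ℕ) :
    Polynomial.derivative (hermiteReal (k + 1)) = Polynomial.C ((k : ℝ) + 1) * hermiteReal k := by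
  induction k with
  | zero => simp [hermiteReal_succ, hermiteReal_zero]
  | succ k ih =>
    rw [hermiteReal_succ (k + 1)]
    simp only [Polynomial.derivative_sub, Polynomial.derivative_mul, Polynomial.derivative_X, ih,
      Polynomial.derivative_C]
    rw [hermiteReal_succ k]
    push_cast
    simp only [Polynomial.C_add, Polynomial.C_1]
    ring

theorem eval_hermiteReal_succ (k : ℕ) (x : ℝ) :
    (hermiteReal (k + 1)).eval x
      = x * (hermiteReal k).eval x - k * (hermiteReal (k - 1)).eval x := by
  cases k with
  | zero => simp [hermiteReal_succ, hermiteReal_zero]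
  | succ k =>
    rw [hermiteReal_succ (k + 1), derivative_hermiteReal_succ]
    simp

theorem integrable_polynomial_gaussianReal (p : Polynomial ℝ) :
    Integrable (fun x => p.eval x) (gaussianReal 0 1) := by
  induction p using Polynomial.induction_on' with
  | add p q hp hq =>
    simp only [Polynomial.eval_add]
    exact hp.add hq
  | monomial k a =>
    have h : MemLp id k (gaussianReal 0 1) := by exact_mod_cast memLp_id_gaussianReal (k : NNReal)
    have hk : Integrable (fun x : ℝ => x ^ k) (gaussianReal 0 1) :=
      h.integrable_norm_pow'.mono' (by fun_prop) (Filter.Eventually.of_forall fun x => by simp)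
    simpa using hk.const_mul a

theorem hasDerivAt_gaussianPDFReal_standard (x : ℝ) :
    HasDerivAt (gaussianPDFReal 0 1) (-x * gaussianPDFReal 0 1 x) x := by
  have h : HasDerivAt (fun x : ℝ => -(x - 0) ^ 2 / (2 * ((1 : NNReal) : ℝ))) (-x) x := by
    have := (((hasDerivAt_id x).sub_const 0).pow 2).neg.div_const (2 * ((1 : NNReal) : ℝ))
    refine HasDerivAt.congr_deriv this ?_
    simp
    ring
  have h2 := (h.exp).const_mul (√(2 * Real.pi * ((1 : NNReal) : ℝ)))⁻¹
  rw [gaussianPDFReal_def]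
  refine h2.congr_deriv ?_
  ring

theorem integrable_polynomial_mul_gaussianPDFReal (p : Polynomial ℝ) :
    Integrable (fun x => p.eval x * gaussianPDFReal 0 1 x) := by
  have h := integrable_polynomial_gaussianReal p
  rw [gaussianReal_of_var_ne_zero _ one_ne_zero,
    integrable_withDensity_iff_integrable_smul' (by fun_prop)
      (Filter.Eventually.of_forall fun x => gaussianPDF_lt_top)] at h
  simpa [toReal_gaussianPDF, mul_comm] using h

/-- Stein's lemma for polynomials. -/
theorem integral_mul_sub_derivative_gaussianReal (p : Polynomial ℝ) :
    ∫ x, (Polynomial.X * p - Polynomial.derivative p).eval x ∂(gaussianReal 0 1) = 0 := by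
  rw [integral_gaussianReal_eq_integral_smul one_ne_zero]
  have hd (x : ℝ) : HasDerivAt (fun x => -(p.eval x * gaussianPDFReal 0 1 x))
      (gaussianPDFReal 0 1 x • (Polynomial.X * p - Polynomial.derivative p).eval x) x := by
    refine ((p.hasDerivAt x).mul (hasDerivAt_gaussianPDFReal_standard x)).neg.congr_deriv ?_
    simp only [smul_eq_mul, Polynomial.eval_sub, Polynomial.eval_mul, Polynomial.eval_X]
    ring
  refine integral_eq_zero_of_hasDerivAt_of_integrable hd ?_ ?_
  · simp only [smul_eq_mul, mul_comm (gaussianPDFReal 0 1 _)]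
    exact integrable_polynomial_mul_gaussianPDFReal _
  · exact (integrable_polynomial_mul_gaussianPDFReal p).neg

theorem integral_hermiteReal_succ_mul (k : ℕ) (q : Polynomial ℝ) :
    ∫ x, (hermiteReal (k + 1) * q).eval x ∂(gaussianReal 0 1)
      = ∫ x, (hermiteReal k * Polynomial.derivative q).eval x ∂(gaussianReal 0 1) := by
  rw [← sub_eq_zero, ← integral_sub (integrable_polynomial_gaussianReal _)
    (integrable_polynomial_gaussianReal _)]
  refine Eq.trans ?_ (integral_mul_sub_derivative_gaussianReal (hermiteReal k * q))
  congr 1 with x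
  simp [hermiteReal_succ]
  ring

theorem integral_hermiteReal_mul (j k : ℕ) :
    ∫ x, (hermiteReal j * hermiteReal k).eval x ∂(gaussianReal 0 1)
      = if j = k then (j.factorial : ℝ) else 0 := by
  induction j generalizing k with
  | zero =>
    cases k with
    | zero => simp [hermiteReal_zero]
    | succ k =>
      rw [mul_comm, integral_hermiteReal_succ_mul]
      simp [hermiteReal_zero]
  | succ j ih =>
    rw [integral_hermiteReal_succ_mul]
    cases k with
    | zero => simp [hermiteReal_zero]
    | succ k =>
      rw [derivative_hermiteReal_succ, mul_left_comm]
      simp only [Polynomial.eval_mul, Polynomial.eval_C] at ih ⊢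
      rw [integral_const_mul, ih]
      by_cases h : j = k
      · simp [h, Nat.factorial_succ]
      · simp [h]

theorem hermiteFn_eq (k : ℕ) (x : ℝ) :
    hermiteFn k x = (hermiteReal k).eval x / √(k.factorial) := rfl

theorem hermiteFn_zero (x : ℝ) : hermiteFn 0 x = 1 := by
  simp [hermiteFn_eq, hermiteReal_zero]

theorem integrable_hermiteFn_mul (j k : ℕ) :
    Integrable (fun x => hermiteFn j x * hermiteFn k x) (gaussianReal 0 1) := by
  have := (integrable_polynomial_gaussianReal (hermiteReal j * hermiteReal k)).div_const
    (√(j.factorial) * √(k.factorial))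
  simpa [hermiteFn_eq, div_mul_div_comm] using this

theorem integral_hermiteFn_mul (j k : ℕ) :
    ∫ x, hermiteFn j x * hermiteFn k x ∂(gaussianReal 0 1) = if j = k then 1 else 0 := by
  have h := integral_hermiteReal_mul j k
  simp only [Polynomial.eval_mul] at h
  simp only [hermiteFn_eq, div_mul_div_comm]
  rw [integral_div, h]
  split_ifs with hjk
  · subst hjk
    rw [Real.mul_self_sqrt (by positivity), div_self (by positivity)]
  · simp

theorem mul_hermiteFn (k : ℕ) (x : ℝ) :
    x * hermiteFn k x = √(k + 1) * hermiteFn (k + 1) x + √k * hermiteFn (k - 1) x := by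
  simp only [hermiteFn_eq, eval_hermiteReal_succ k x]
  cases k with
  | zero => simp
  | succ k =>
    have h1 : √((k : ℝ) + 1) ≠ 0 := by positivity
    have h2 : √((k : ℝ) + 1 + 1) ≠ 0 := by positivity
    have h3 : √(k.factorial : ℝ) ≠ 0 := by positivity
    have h4 : √((k : ℝ) + 1) ^ 2 = k + 1 := Real.sq_sqrt (by positivity)
    simp only [Nat.factorial_succ, Nat.cast_mul, Nat.cast_add, Nat.cast_one, Nat.add_sub_cancel]
    rw [Real.sqrt_mul (by positivity), Real.sqrt_mul (by positivity), Real.sqrt_mul (by positivity)]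
    field_simp
    rw [h4]
    ring

theorem sum_antidiagonal_choose_mul_left (f : ℕ → ℕ → ℝ) (k : ℕ) :
    ∑ p ∈ Finset.HasAntidiagonal.antidiagonal (k + 1),
        ((k + 1).choose p.1 : ℝ) * (p.1 * f (p.1 - 1) p.2)
      = (k + 1) * ∑ p ∈ Finset.HasAntidiagonal.antidiagonal k, (k.choose p.1 : ℝ) * f p.1 p.2 := by
  rw [Finset.Nat.sum_antidiagonal_succ, Finset.mul_sum]
  simp only [Nat.cast_zero, zero_mul, mul_zero, zero_add, Nat.add_sub_cancel]
  refine Finset.sum_congr rfl fun p _ => ?_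
  have h : ((k : ℝ) + 1) * k.choose p.1 = (k + 1).choose (p.1 + 1) * ((p.1 : ℝ) + 1) := by
    exact_mod_cast Nat.add_one_mul_choose_eq k p.1
  push_cast
  linear_combination (-f p.1 p.2) * h

theorem sum_antidiagonal_choose_mul_right (f : ℕ → ℕ → ℝ) (k : ℕ) :
    ∑ p ∈ Finset.HasAntidiagonal.antidiagonal (k + 1),
        ((k + 1).choose p.1 : ℝ) * (p.2 * f p.1 (p.2 - 1))
      = (k + 1) * ∑ p ∈ Finset.HasAntidiagonal.antidiagonal k, (k.choose p.1 : ℝ) * f p.1 p.2 := by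
  rw [Finset.Nat.sum_antidiagonal_succ', Finset.mul_sum]
  simp only [Nat.cast_zero, zero_mul, mul_zero, zero_add, Nat.add_sub_cancel]
  refine Finset.sum_congr rfl fun p hp => ?_
  have hp : p.1 + p.2 = k := Finset.HasAntidiagonal.mem_antidiagonal.mp hp
  have h : ((k : ℝ) + 1) * k.choose p.1 = (k + 1).choose p.1 * ((p.2 : ℝ) + 1) := by
    rw [Nat.choose_symm_of_eq_add hp.symm,
      Nat.choose_symm_of_eq_add (show k + 1 = p.1 + (p.2 + 1) by omega)]
    exact_mod_cast Nat.add_one_mul_choose_eq k p.2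
  push_cast
  linear_combination (-f p.1 p.2) * h

/-- The addition formula for Hermite polynomials. -/
theorem eval_hermiteReal_add {a b : ℝ} (hab : a ^ 2 + b ^ 2 = 1) (y z : ℝ) (k : ℕ) :
    (hermiteReal k).eval (a * y + b * z)
      = ∑ p ∈ Finset.HasAntidiagonal.antidiagonal k, (k.choose p.1 : ℝ) *
        ((a ^ p.1 * (hermiteReal p.1).eval y) * (b ^ p.2 * (hermiteReal p.2).eval z)) := by
  have hrec (c x : ℝ) (j : ℕ) : c ^ (j + 1) * (hermiteReal (j + 1)).eval x
      = c * x * (c ^ j * (hermiteReal j).eval x)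
        - c ^ 2 * (j * (c ^ (j - 1) * (hermiteReal (j - 1)).eval x)) := by
    rw [eval_hermiteReal_succ]
    cases j with
    | zero => simp [mul_assoc]
    | succ j => rw [Nat.add_sub_cancel]; ring
  induction k using Nat.strong_induction_on with
  | _ k ih =>
    cases k with
    | zero => simp [hermiteReal_zero]
    | succ k =>
      rw [Finset.sum_antidiagonal_choose_succ_mul (fun i j =>
        (a ^ i * (hermiteReal i).eval y) * (b ^ j * (hermiteReal j).eval z)),
        ← Finset.sum_add_distrib, eval_hermiteReal_succ, ih k (by omega)]
      cases k with
      | zero => simp [hermiteReal_succ, hermiteReal_zero, add_comm]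
      | succ k =>
        have hl := sum_antidiagonal_choose_mul_left (fun i j =>
          (a ^ i * (hermiteReal i).eval y) * (b ^ j * (hermiteReal j).eval z)) k
        have hr := sum_antidiagonal_choose_mul_right (fun i j =>
          (a ^ i * (hermiteReal i).eval y) * (b ^ j * (hermiteReal j).eval z)) k
        have hsplit : ((k + 1 : ℕ) : ℝ) * (hermiteReal (k + 1 - 1)).eval (a * y + b * z)
            = a ^ 2 * ((k + 1) * (hermiteReal k).eval (a * y + b * z))
              + b ^ 2 * ((k + 1) * (hermiteReal k).eval (a * y + b * z)) := by
          rw [← add_mul, hab]; simp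
        rw [hsplit, ih k (by omega)]
        nth_rewrite 1 [← hl]
        rw [← hr, Finset.mul_sum, Finset.mul_sum, Finset.mul_sum,
          ← Finset.sum_add_distrib, ← Finset.sum_sub_distrib]
        refine Finset.sum_congr rfl fun p hp => ?_
        rw [Nat.choose_symm_of_eq_add (Finset.HasAntidiagonal.mem_antidiagonal.mp hp).symm]
        simp only [hrec]
        ring

/-- The square root of the probability that a binomial variable with parameters `k` and `t`
takes the value `j`. -/
noncomputable def binomWeight (t : ℝ) (k j : ℕ) : ℝ :=
  √(k.choose j) * (√t ^ j * √(1 - t) ^ (k - j))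

theorem binomWeight_of_lt {t : ℝ} {k j : ℕ} (h : k < j) : binomWeight t k j = 0 := by
  simp [binomWeight, Nat.choose_eq_zero_of_lt h]

theorem sum_binomWeight_sq {t : ℝ} (ht0 : 0 ≤ t) (ht1 : t ≤ 1) (R : ℝ) {k D : ℕ} (hk : k ≤ D) :
    ∑ j ∈ Finset.range (D + 1), R ^ (2 * j) * binomWeight t k j ^ 2
      = (1 - t + R ^ 2 * t) ^ k := by
  rw [← Finset.sum_subset (Finset.range_mono (Nat.succ_le_succ hk)), add_comm, add_pow]
  · refine Finset.sum_congr rfl fun j _ => ?_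
    rw [binomWeight, mul_pow, mul_pow, ← pow_mul, ← pow_mul, mul_comm j 2, mul_comm (k - j) 2,
      pow_mul (√t), pow_mul (√(1 - t)), Real.sq_sqrt (by positivity), Real.sq_sqrt ht0,
      Real.sq_sqrt (by linarith)]
    ring
  · intro j _ hj
    rw [binomWeight_of_lt (by simpa [Nat.lt_succ_iff] using hj)]
    ring

theorem hermiteFn_add {t : ℝ} (ht0 : 0 ≤ t) (ht1 : t ≤ 1) (y z : ℝ) {k D : ℕ} (hk : k ≤ D) :
    hermiteFn k (√(1 - t) * z + √t * y)
      = ∑ j ∈ Finset.range (D + 1),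
        binomWeight t k j * (hermiteFn j y * hermiteFn (k - j) z) := by
  rw [← Finset.sum_subset (Finset.range_mono (Nat.succ_le_succ hk)), hermiteFn_eq, add_comm,
    eval_hermiteReal_add (by rw [Real.sq_sqrt ht0, Real.sq_sqrt (by linarith)]; ring),
    Finset.Nat.sum_antidiagonal_eq_sum_range_succ_mk, Finset.sum_div]
  · refine Finset.sum_congr rfl fun j hj => ?_
    have hjk : j ≤ k := Nat.lt_succ_iff.mp (Finset.mem_range.mp hj)
    have h1 : √(k.factorial : ℝ) = √(k.choose j) * (√(j.factorial) * √((k - j).factorial)) := by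
      rw [← Nat.choose_mul_factorial_mul_factorial hjk]
      push_cast
      rw [Real.sqrt_mul (by positivity), Real.sqrt_mul (by positivity), mul_assoc]
    have h2 : (k.choose j : ℝ) = √(k.choose j) * √(k.choose j) :=
      (Real.mul_self_sqrt (by positivity)).symm
    have h3 : √(k.choose j : ℝ) ≠ 0 :=
      Real.sqrt_ne_zero'.mpr (by exact_mod_cast Nat.choose_pos hjk)
    rw [h1, hermiteFn_eq, hermiteFn_eq, binomWeight]
    nth_rewrite 1 [h2]
    field_simp
  · intro j _ hj
    rw [binomWeight_of_lt (by simpa [Nat.lt_succ_iff] using hj)]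
    ring

/-! ### The multivariate Hermite polynomials -/

instance (n : ℕ) : IsProbabilityMeasure (gaussianN n) := by
  unfold gaussianN
  infer_instance

section Multivariate

variable {n : ℕ}

theorem hermiteMv_zero (x : Fin n → ℝ) : hermiteMv 0 x = 1 := by
  simp [hermiteMv, hermiteFn_zero]

theorem integrable_hermiteMv_mul (α β : Fin n → ℕ) :
    Integrable (fun x => hermiteMv α x * hermiteMv β x) (gaussianN n) := by
  simp only [hermiteMv, ← Finset.prod_mul_distrib]
  exact Integrable.fintype_prod (f := fun i t => hermiteFn (α i) t * hermiteFn (β i) t)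
    fun i => integrable_hermiteFn_mul _ _

theorem integrable_hermiteMv (α : Fin n → ℕ) : Integrable (hermiteMv α) (gaussianN n) := by
  simpa [hermiteMv_zero] using integrable_hermiteMv_mul α 0

theorem integral_hermiteMv_mul (α β : Fin n → ℕ) :
    ∫ x, hermiteMv α x * hermiteMv β x ∂(gaussianN n) = if α = β then 1 else 0 := by
  simp only [hermiteMv, ← Finset.prod_mul_distrib, gaussianN]
  rw [integral_fintype_prod_eq_prod (fun i t => hermiteFn (α i) t * hermiteFn (β i) t)]
  simp only [integral_hermiteFn_mul, funext_iff]
  rw [Finset.prod_ite_zero]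
  simp

theorem integral_hermiteMv (α : Fin n → ℕ) :
    ∫ x, hermiteMv α x ∂(gaussianN n) = if α = 0 then 1 else 0 := by
  simpa [hermiteMv_zero] using integral_hermiteMv_mul α 0

theorem integrable_sq_sum_hermiteMv {ι : Type*} (T : Finset ι) (c : ι → ℝ)
    (f : ι → Fin n → ℕ) :
    Integrable (fun x => (∑ a ∈ T, c a * hermiteMv (f a) x) ^ 2) (gaussianN n) := by
  simp only [sq, Finset.sum_mul_sum, mul_mul_mul_comm]
  exact integrable_finsetSum _ fun a _ => integrable_finsetSum _ fun b _ =>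
    (integrable_hermiteMv_mul _ _).const_mul _

/-- Parseval's identity, for a family of Hermite polynomials without repetitions among the
nonzero coefficients. -/
theorem integral_sq_sum_hermiteMv {ι : Type*} (T : Finset ι) (c : ι → ℝ)
    (f : ι → Fin n → ℕ) (hf : ∀ a ∈ T, ∀ b ∈ T, c a ≠ 0 → c b ≠ 0 → f a = f b → a = b) :
    ∫ x, (∑ a ∈ T, c a * hermiteMv (f a) x) ^ 2 ∂(gaussianN n) = ∑ a ∈ T, c a ^ 2 := by
  simp only [sq, Finset.sum_mul_sum, mul_mul_mul_comm]
  rw [integral_finsetSum _ fun a _ => integrable_finsetSum _ fun b _ =>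
    (integrable_hermiteMv_mul _ _).const_mul _]
  refine Finset.sum_congr rfl fun a ha => ?_
  rw [integral_finsetSum _ fun b _ => (integrable_hermiteMv_mul _ _).const_mul _,
    Finset.sum_eq_single_of_mem a ha]
  · simp [integral_const_mul, integral_hermiteMv_mul]
  · intro b hb hba
    rw [integral_const_mul, integral_hermiteMv_mul]
    by_cases hca : c a = 0
    · simp [hca]
    by_cases hcb : c b = 0
    · simp [hcb]
    rw [if_neg fun h => hba (hf a ha b hb hca hcb h).symm, mul_zero]

theorem hermiteCoeffF_sum (T : Finset (Fin n → ℕ)) (c : (Fin n → ℕ) → ℝ) (β : Fin n → ℕ) :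
    hermiteCoeffF (fun x => ∑ α ∈ T, c α * hermiteMv α x) β = if β ∈ T then c β else 0 := by
  simp only [hermiteCoeffF, Finset.sum_mul, mul_assoc]
  rw [integral_finsetSum _ fun b _ => (integrable_hermiteMv_mul _ _).const_mul _]
  simp [integral_const_mul, integral_hermiteMv_mul]

theorem noiseOpF_sum (R : ℝ) (T : Finset (Fin n → ℕ)) (c : (Fin n → ℕ) → ℝ) (y : Fin n → ℝ) :
    noiseOpF R (fun x => ∑ α ∈ T, c α * hermiteMv α x) y
      = ∑ α ∈ T, R ^ (∑ i, α i) * c α * hermiteMv α y := by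
  simp only [noiseOpF, hermiteCoeffF_sum]
  rw [tsum_eq_sum (s := T) fun α hα => by simp [hα]]
  exact Finset.sum_congr rfl fun α hα => by simp [hα]

theorem eval_mul_hermiteMv (α : Fin n → ℕ) (i : Fin n) (x : Fin n → ℝ) :
    x i * hermiteMv α x
      = √(α i + 1) * hermiteMv (Function.update α i (α i + 1)) x
        + √(α i) * hermiteMv (Function.update α i (α i - 1)) x := by
  have h (m : ℕ) : hermiteMv (Function.update α i m) x
      = hermiteFn m (x i) * ∏ j ∈ Finset.univ.erase i, hermiteFn (α j) (x j) := by
    rw [hermiteMv, ← Finset.mul_prod_erase _ _ (Finset.mem_univ i), Function.update_self]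
    congr 1
    exact Finset.prod_congr rfl fun j hj => by
      rw [Function.update_of_ne (Finset.ne_of_mem_erase hj)]
  have h0 := h (α i)
  rw [Function.update_eq_self] at h0
  rw [h0, h, h, ← mul_assoc, mul_hermiteFn]
  ring

theorem eval_mem_span_hermiteMv (g : MvPolynomial (Fin n) ℝ) :
    (fun x => eval x g) ∈ Submodule.span ℝ (Set.range (hermiteMv (n := n))) := by
  induction g using MvPolynomial.induction_on with
  | C a =>
    have h : (fun x : Fin n → ℝ => eval x (C a)) = a • hermiteMv 0 := by
      ext x; simp [hermiteMv_zero]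
    rw [h]
    exact Submodule.smul_mem _ _ (Submodule.subset_span ⟨0, rfl⟩)
  | add p q hp hq =>
    simp only [map_add]
    exact Submodule.add_mem _ hp hq
  | mul_X p i hp =>
    simp only [map_mul, eval_X]
    refine Submodule.span_induction (p := fun (f : (Fin n → ℝ) → ℝ) _ => (fun x => f x * x i) ∈
      Submodule.span ℝ (Set.range (hermiteMv (n := n)))) ?_ ?_ ?_ ?_ hp
    · rintro _ ⟨α, rfl⟩
      have h : (fun x => hermiteMv α x * x i)
          = √(α i + 1) • hermiteMv (Function.update α i (α i + 1))
            + √(α i) • hermiteMv (Function.update α i (α i - 1)) := by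
        ext x
        rw [mul_comm, eval_mul_hermiteMv]
        rfl
      rw [h]
      exact Submodule.add_mem _ (Submodule.smul_mem _ _ (Submodule.subset_span ⟨_, rfl⟩))
        (Submodule.smul_mem _ _ (Submodule.subset_span ⟨_, rfl⟩))
    · simp only [Pi.zero_apply, zero_mul]
      exact Submodule.zero_mem _
    · intro f₁ f₂ _ _ h₁ h₂
      simp only [Pi.add_apply, add_mul]
      exact Submodule.add_mem _ h₁ h₂
    · intro a f _ h
      simp only [Pi.smul_apply, smul_eq_mul, mul_assoc]
      exact Submodule.smul_mem _ a h

/-- The multi-indices all of whose entries are at most `D`. -/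
def multiIndexBox (n D : ℕ) : Finset (Fin n → ℕ) :=
  Fintype.piFinset fun _ => Finset.range (D + 1)

theorem mem_multiIndexBox {D : ℕ} {α : Fin n → ℕ} :
    α ∈ multiIndexBox n D ↔ ∀ i, α i ≤ D := by
  simp [multiIndexBox]

theorem exists_hermite_expansion (g : MvPolynomial (Fin n) ℝ) :
    ∃ (D : ℕ) (a : (Fin n → ℕ) → ℝ),
      ∀ x, eval x g = ∑ β ∈ multiIndexBox n D, a β * hermiteMv β x := by
  obtain ⟨a, ha⟩ := Finsupp.mem_span_range_iff_exists_finsupp.mp (eval_mem_span_hermiteMv g)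
  refine ⟨a.support.sup fun β => ∑ i, β i, a, fun x => ?_⟩
  have h := congrFun ha x
  simp only [Finsupp.sum, Finset.sum_apply, Pi.smul_apply, smul_eq_mul] at h
  rw [← h]
  refine Finset.sum_subset (fun β hβ => mem_multiIndexBox.mpr fun i => ?_) fun β _ hβ => ?_
  · exact (Finset.single_le_sum (fun j _ => Nat.zero_le (β j)) (Finset.mem_univ i)).trans
      (Finset.le_sup (f := fun β : Fin n → ℕ => ∑ i, β i) hβ)
  · rw [Finsupp.notMem_support_iff.mp hβ, zero_mul]

/-- The product of the binomial weights over all coordinates. -/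
noncomputable def multiBinomWeight (t : ℝ) (β α : Fin n → ℕ) : ℝ :=
  ∏ i, binomWeight t (β i) (α i)

theorem le_of_multiBinomWeight_ne_zero {t : ℝ} {β α : Fin n → ℕ}
    (h : multiBinomWeight t β α ≠ 0) : α ≤ β := fun i => by
  by_contra! hi
  exact h (Finset.prod_eq_zero (Finset.mem_univ i) (binomWeight_of_lt hi))

theorem multiBinomWeight_zero_sq {t : ℝ} (ht1 : t ≤ 1) (β : Fin n → ℕ) :
    multiBinomWeight t β 0 ^ 2 = (1 - t) ^ (∑ i, β i) := by
  rw [multiBinomWeight, ← Finset.prod_pow, ← Finset.prod_pow_eq_pow_sum]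
  refine Finset.prod_congr rfl fun i _ => ?_
  simp only [binomWeight, Pi.zero_apply, Nat.choose_zero_right, Nat.cast_one, Real.sqrt_one,
    pow_zero, one_mul, Nat.sub_zero]
  rw [← pow_mul, mul_comm, pow_mul, Real.sq_sqrt (by linarith)]

theorem sum_multiBinomWeight_sq {t : ℝ} (ht0 : 0 ≤ t) (ht1 : t ≤ 1) (R : ℝ) {D : ℕ}
    {β : Fin n → ℕ} (hβ : β ∈ multiIndexBox n D) :
    ∑ α ∈ multiIndexBox n D, (R ^ (∑ i, α i)) ^ 2 * multiBinomWeight t β α ^ 2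
      = (1 - t + R ^ 2 * t) ^ (∑ i, β i) := by
  rw [← Finset.prod_pow_eq_pow_sum, ← Finset.prod_congr rfl fun i _ =>
    sum_binomWeight_sq ht0 ht1 R (mem_multiIndexBox.mp hβ i), Finset.prod_univ_sum]
  refine Finset.sum_congr rfl fun α _ => ?_
  rw [Finset.prod_mul_distrib, Finset.prod_pow_eq_pow_sum, ← Finset.mul_sum, multiBinomWeight,
    Finset.prod_pow, ← pow_mul, mul_comm 2]

theorem hermiteMv_add {t : ℝ} (ht0 : 0 ≤ t) (ht1 : t ≤ 1) (y z : Fin n → ℝ) {D : ℕ}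
    {β : Fin n → ℕ} (hβ : β ∈ multiIndexBox n D) :
    hermiteMv β (fun i => √(1 - t) * z i + √t * y i)
      = ∑ α ∈ multiIndexBox n D,
        multiBinomWeight t β α * (hermiteMv α y * hermiteMv (β - α) z) := by
  rw [hermiteMv, Finset.prod_congr rfl fun i _ =>
    hermiteFn_add ht0 ht1 (y i) (z i) (mem_multiIndexBox.mp hβ i), Finset.prod_univ_sum]
  refine Finset.sum_congr rfl fun α _ => ?_
  simp only [Finset.prod_mul_distrib, multiBinomWeight, hermiteMv, Pi.sub_apply]

/-! ### The expected square of the noisy derivative -/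

theorem integral_sq_sub_div_sqrt_two {Ω : Type*} [MeasurableSpace Ω] (μ : Measure Ω)
    [IsProbabilityMeasure μ] {P : Ω → ℝ} (h1 : Integrable P μ)
    (h2 : Integrable (fun y => P y ^ 2) μ) :
    ∫ y, ∫ y', ((P y - P y') / √2) ^ 2 ∂μ ∂μ = ∫ y, P y ^ 2 ∂μ - (∫ y, P y ∂μ) ^ 2 := by
  have hs (u v : ℝ) : ((u - v) / √2) ^ 2 = u ^ 2 / 2 - u * v + v ^ 2 / 2 := by
    rw [div_pow, Real.sq_sqrt (by norm_num)]
    ring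
  simp only [hs]
  have hi (y : Ω) : ∫ y', (P y ^ 2 / 2 - P y * P y' + P y' ^ 2 / 2) ∂μ
      = P y ^ 2 / 2 - P y * (∫ y', P y' ∂μ) + (∫ y', P y' ^ 2 ∂μ) / 2 := by
    have hk : Integrable (fun y' => P y ^ 2 / 2 - P y * P y') μ :=
      (integrable_const _).sub (h1.const_mul _)
    rw [integral_add hk (h2.div_const _), integral_sub (integrable_const _) (h1.const_mul _),
      integral_const_mul]
    simp [integral_div]
  simp only [hi]
  have hk : Integrable (fun y => P y ^ 2 / 2 - P y * ∫ y', P y' ∂μ) μ :=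
    (h2.div_const _).sub (h1.mul_const _)
  rw [integral_add hk (integrable_const _), integral_sub (h2.div_const _) (h1.mul_const _),
    integral_mul_const, integral_div]
  simp
  ring

theorem integral_sq_noise_sub {R : ℝ} {D : ℕ} (c : (Fin n → ℕ) → ℝ) :
    ∫ y, ∫ y', ((noiseOpF R (fun x => ∑ α ∈ multiIndexBox n D, c α * hermiteMv α x) y
        - noiseOpF R (fun x => ∑ α ∈ multiIndexBox n D, c α * hermiteMv α x) y') / √2) ^ 2
        ∂(gaussianN n) ∂(gaussianN n)
      = ∑ α ∈ multiIndexBox n D, (R ^ (∑ i, α i)) ^ 2 * c α ^ 2 - c 0 ^ 2 := by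
  simp only [noiseOpF_sum]
  have h0 : (0 : Fin n → ℕ) ∈ multiIndexBox n D := mem_multiIndexBox.mpr fun i => Nat.zero_le _
  rw [integral_sq_sub_div_sqrt_two _
      (integrable_finsetSum _ fun α _ => (integrable_hermiteMv α).const_mul _)
      (integrable_sq_sum_hermiteMv _ _ fun α => α),
    integral_sq_sum_hermiteMv _ _ (fun α => α) fun _ _ _ _ _ _ h => h,
    integral_finsetSum _ fun α _ => (integrable_hermiteMv α).const_mul _]
  simp [integral_const_mul, integral_hermiteMv, h0, mul_pow]

/-- The expected square of the noisy derivative of a random zoom, in terms of the Hermite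
expansion. -/
theorem integral_sq_noise_zoom {R t : ℝ} (ht0 : 0 ≤ t) (ht1 : t ≤ 1) {D : ℕ}
    {a : (Fin n → ℕ) → ℝ} {F : (Fin n → ℝ) → ℝ}
    (hF : ∀ x, F x = ∑ β ∈ multiIndexBox n D, a β * hermiteMv β x) :
    ∫ z, ∫ y, ∫ y', ((noiseOpF R (fun y => F fun i => √(1 - t) * z i + √t * y i) y
        - noiseOpF R (fun y => F fun i => √(1 - t) * z i + √t * y i) y') / √2) ^ 2
        ∂(gaussianN n) ∂(gaussianN n) ∂(gaussianN n)
      = ∑ β ∈ multiIndexBox n D,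
        a β ^ 2 * ((1 - t + R ^ 2 * t) ^ (∑ i, β i) - (1 - t) ^ (∑ i, β i)) := by
  have hexp (z : Fin n → ℝ) : (fun y => F fun i => √(1 - t) * z i + √t * y i)
      = fun y => ∑ α ∈ multiIndexBox n D,
        (∑ β ∈ multiIndexBox n D, a β * multiBinomWeight t β α * hermiteMv (β - α) z)
          * hermiteMv α y := by
    ext y
    rw [hF, Finset.sum_congr rfl fun β hβ => by rw [hermiteMv_add ht0 ht1 y z hβ]]
    simp only [Finset.mul_sum, Finset.sum_mul]
    rw [Finset.sum_comm]
    exact Finset.sum_congr rfl fun α _ => Finset.sum_congr rfl fun β _ => by ring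
  have hparseval (α : Fin n → ℕ) :
      ∫ z, (∑ β ∈ multiIndexBox n D, a β * multiBinomWeight t β α * hermiteMv (β - α) z) ^ 2
        ∂(gaussianN n) = ∑ β ∈ multiIndexBox n D, (a β * multiBinomWeight t β α) ^ 2 := by
    refine integral_sq_sum_hermiteMv _ _ (fun β => β - α) fun β _ γ _ hβ hγ h => ?_
    have h1 := le_of_multiBinomWeight_ne_zero (right_ne_zero_of_mul hβ)
    have h2 := le_of_multiBinomWeight_ne_zero (right_ne_zero_of_mul hγ)
    exact (tsub_left_inj h1 h2).mp h
  have hint (α : Fin n → ℕ) := integrable_sq_sum_hermiteMv (multiIndexBox n D)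
    (fun β => a β * multiBinomWeight t β α) fun β => β - α
  simp only [hexp, integral_sq_noise_sub]
  rw [integral_sub (integrable_finsetSum _ fun α _ => (hint α).const_mul _) (hint 0),
    integral_finsetSum _ fun α _ => (hint α).const_mul _]
  simp only [integral_const_mul, hparseval, mul_pow, Finset.mul_sum, mul_sub,
    Finset.sum_sub_distrib, multiBinomWeight_zero_sq ht1]
  rw [Finset.sum_comm]
  congr 1
  refine Finset.sum_congr rfl fun β hβ => ?_
  rw [← sum_multiBinomWeight_sq ht0 ht1 R hβ, Finset.mul_sum]
  exact Finset.sum_congr rfl fun α _ => by ring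

theorem eval_aeval_affine (g : MvPolynomial (Fin n) ℝ) (c : Fin n → ℝ) (s : ℝ)
    (y : Fin n → ℝ) :
    eval y (aeval (fun i => C (c i) + C s * X i) g) = eval (fun i => c i + s * y i) g := by
  induction g using MvPolynomial.induction_on with
  | C a => simp
  | add p q hp hq => simp only [map_add, hp, hq]
  | mul_X p i hp => simp only [map_mul, map_add, aeval_X, eval_C, eval_X, hp]

theorem eval_zoom (g : MvPolynomial (Fin n) ℝ) (lam : ℝ) (x y : Fin n → ℝ) :
    eval y (zoom g lam x) = eval (fun i => √(1 - lam) * x i + √lam * y i) g :=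
  eval_aeval_affine g _ _ y

end Multivariate

theorem sub_pow_le_sub_pow {R s t : ℝ} (hR : 1 ≤ R) (hs0 : 0 ≤ s) (hst : s ≤ t) (ht1 : t ≤ 1)
    (m : ℕ) :
    (1 - s + R ^ 2 * s) ^ m - (1 - s) ^ m ≤ (1 - t + R ^ 2 * t) ^ m - (1 - t) ^ m := by
  have hR2 : 0 ≤ R ^ 2 - 1 := by nlinarith
  have h1 : (1 - s + R ^ 2 * s) ^ m ≤ (1 - t + R ^ 2 * t) ^ m :=
    pow_le_pow_left₀ (by nlinarith) (by nlinarith) m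
  have h2 : (1 - t) ^ m ≤ (1 - s) ^ m := pow_le_pow_left₀ (by linarith) (by linarith) m
  linarith

/-- Derivatives commute with zooms, in expectation (Proposition on every outcome):
for `R ≥ 1`, a polynomial `g`, `0 < ρ < 1`, `0 ≤ λ ≤ 1`, any fixed `x`, and
independent `y, y', z ∼ N(0,1)^n`,
`E[((Δ^{R,λ}_{y,y'}(g_{ρ|z}))(x))²] ≤ E[((Δ^{R,λ}_{y,y'} g)_{ρ|z}(x))²]`,
where `(Δ^{R,λ}_{y,y'} g)_{ρ|z}(x) = (Δ^{R,λ}_{y,y'} g)(√(1-ρ)·z + √ρ·x)`. -/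
theorem delta_zoom_inequality (n : ℕ) (R : ℝ) (hR : 1 ≤ R)
    (g : MvPolynomial (Fin n) ℝ) (ρ lam : ℝ) (hρ0 : 0 < ρ) (hρ1 : ρ < 1)
    (hl0 : 0 ≤ lam) (hl1 : lam ≤ 1) (x : Fin n → ℝ) :
    (∫ z, ∫ y, ∫ y', (deltaOp R lam y y' (zoom g ρ z) x) ^ 2
        ∂(gaussianN n) ∂(gaussianN n) ∂(gaussianN n)) ≤
      ∫ z, ∫ y, ∫ y',
        (deltaOp R lam y y' g (fun i => Real.sqrt (1 - ρ) * z i + Real.sqrt ρ * x i)) ^ 2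
        ∂(gaussianN n) ∂(gaussianN n) ∂(gaussianN n) := by
  set v : ℝ := 1 - ρ + ρ * lam with hv
  have hv0 : 0 < v := by nlinarith
  set G : MvPolynomial (Fin n) ℝ :=
    aeval (fun i => C (√(1 - lam) * √ρ * x i) + C (√v) * X i) g with hG
  obtain ⟨D, a, ha⟩ := exists_hermite_expansion G
  have hsqrt (t w : ℝ) (h : v * t = w) : √v * √t = √w := by
    rw [← h, Real.sqrt_mul hv0.le]
  have hl : √v * √(1 - ρ * lam / v) = √(1 - ρ) := hsqrt _ _ (by field_simp; rw [hv]; ring)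
  have hl' : √v * √(ρ * lam / v) = √ρ * √lam := by
    rw [hsqrt _ (ρ * lam) (by field_simp), Real.sqrt_mul hρ0.le]
  have hr : √v * √(1 - lam / v) = √(1 - lam) * √(1 - ρ) := by
    rw [hsqrt _ ((1 - lam) * (1 - ρ)) (by field_simp; rw [hv]; ring),
      Real.sqrt_mul (by linarith)]
  have hr' : √v * √(lam / v) = √lam := hsqrt _ _ (by field_simp)
  have hleft (z : Fin n → ℝ) : (fun y => eval y (zoom (zoom g ρ z) lam x))
      = fun y => eval (fun i => √(1 - ρ * lam / v) * z i + √(ρ * lam / v) * y i) G := by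
    ext y
    rw [hG, eval_aeval_affine, eval_zoom, eval_zoom]
    congr 2 with i
    linear_combination (-z i) * hl - y i * hl'
  have hright (z : Fin n → ℝ) :
      (fun y => eval y (zoom g lam fun i => √(1 - ρ) * z i + √ρ * x i))
      = fun y => eval (fun i => √(1 - lam / v) * z i + √(lam / v) * y i) G := by
    ext y
    rw [hG, eval_aeval_affine, eval_zoom]
    congr 2 with i
    linear_combination (-z i) * hr - y i * hr'
  have hle : ρ * lam / v ≤ lam / v := by
    gcongr
    nlinarith
  have hlam : lam / v ≤ 1 := by
    rw [div_le_one hv0]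
    nlinarith
  have h0 : 0 ≤ ρ * lam / v := by positivity
  simp only [deltaOp, noiseOpP, hleft, hright]
  rw [integral_sq_noise_zoom h0 (hle.trans hlam) ha,
    integral_sq_noise_zoom (h0.trans hle) hlam ha]
  exact Finset.sum_le_sum fun β _ => mul_le_mul_of_nonneg_left
    (sub_pow_le_sub_pow hR h0 hle hlam _) (sq_nonneg _)
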